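/- If m ≡ 4 (mod 6) and m, n ≥ 3, then γ_p^2(f_{n×m}) = 2·⌈(2nm - 5n)/12⌉. -/

import Mathlib

abbrev FlowerVert (n m : ℕ) := ZMod n ⊕ ZMod n × Fin (m - 2)

def flowerRel (n m : ℕ) : FlowerVert n m → FlowerVert n m → Prop
  | Sum.inl i, Sum.inl i' => i' = i + 1
  | Sum.inl i, Sum.inr (i', j) => (i' = i ∧ j.val = 0) ∨ (i = i' + 1 ∧ j.val = m - 3)
  | Sum.inr (i, j), Sum.inr (i', j') => i' = i ∧ j'.val = j.val + 1
  | _, _ => False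

/-- The flower graph `f_{n×m}`. -/
def flowerGraph (n m : ℕ) : SimpleGraph (FlowerVert n m) :=
  SimpleGraph.fromRel (flowerRel n m)

/-- `D` is a paired dominating set of `G`. -/
def IsPairedDominating {V : Type*} (G : SimpleGraph V) (D : Set V) : Prop :=
  (∀ v ∉ D, ∃ u ∈ D, G.Adj u v) ∧
  ∃ M : G.Subgraph, M.verts = D ∧ M.IsMatching

/-- `D` is a `k`-distance paired dominating set of `G`. -/
def IsKDistPairedDominating {V : Type*} (G : SimpleGraph V) (k : ℕ) (D : Set V) : Prop :=
  (∀ v ∉ D, ∃ u ∈ D, G.edist u v ≤ k) ∧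
  ∃ M : G.Subgraph, M.verts = D ∧ M.IsMatching

/-- The paired domination number `γ_p(G)`. -/
noncomputable def pairedDomNum {V : Type*} (G : SimpleGraph V) : ℕ :=
  sInf {c | ∃ D : Set V, IsPairedDominating G D ∧ D.ncard = c}

/-- The `k`-distance paired domination number `γ_p^k(G)`. -/
noncomputable def kDistPairedDomNum {V : Type*} (G : SimpleGraph V) (k : ℕ) : ℕ :=
  sInf {c | ∃ D : Set V, IsKDistPairedDominating G k D ∧ D.ncard = c}

/-- The `k`-distance domination number `γ^k(G)`. -/
noncomputable def kDistDomNum {V : Type*} (G : SimpleGraph V) (k : ℕ) : ℕ :=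
  sInf {c | ∃ D : Set V, (∀ v ∉ D, ∃ u ∈ D, G.edist u v ≤ k) ∧ D.ncard = c}


section FlowerProof

theorem fl_adj_uu {n m : ℕ} (hn : 3 ≤ n) (a b : ZMod n) :
    (flowerGraph n m).Adj (Sum.inl a) (Sum.inl b) ↔ (b = a + 1 ∨ a = b + 1) := by
  have : Fact (1 < n) := ⟨by omega⟩
  simp only [flowerGraph, SimpleGraph.fromRel_adj, flowerRel, ne_eq, Sum.inl.injEq]
  constructor
  · exact fun h => h.2
  · intro h
    refine ⟨?_, h⟩
    rintro rfl
    simp at h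

theorem fl_adj_uv {n m : ℕ} (a i : ZMod n) (j : Fin (m - 2)) :
    (flowerGraph n m).Adj (Sum.inl a) (Sum.inr (i, j)) ↔
      ((i = a ∧ j.val = 0) ∨ (a = i + 1 ∧ j.val = m - 3)) := by
  simp [flowerGraph, SimpleGraph.fromRel_adj, flowerRel]

theorem fl_adj_vu {n m : ℕ} (a i : ZMod n) (j : Fin (m - 2)) :
    (flowerGraph n m).Adj (Sum.inr (i, j)) (Sum.inl a) ↔
      ((i = a ∧ j.val = 0) ∨ (a = i + 1 ∧ j.val = m - 3)) := by
  rw [SimpleGraph.adj_comm, fl_adj_uv]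

theorem fl_adj_vv {n m : ℕ} (i i' : ZMod n) (j j' : Fin (m - 2)) :
    (flowerGraph n m).Adj (Sum.inr (i, j)) (Sum.inr (i', j')) ↔
      (i' = i ∧ (j'.val = j.val + 1 ∨ j.val = j'.val + 1)) := by
  simp only [flowerGraph, SimpleGraph.fromRel_adj, flowerRel, ne_eq, Sum.inr.injEq, Prod.mk.injEq]
  constructor
  · rintro ⟨-, h⟩
    rcases h with h | h
    · exact ⟨h.1, Or.inl h.2⟩
    · exact ⟨h.1.symm, Or.inr h.2⟩
  · rintro ⟨rfl, h⟩
    refine ⟨?_, ?_⟩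
    · rintro ⟨-, rfl⟩
      omega
    · rcases h with h | h
      · exact Or.inl ⟨rfl, h⟩
      · exact Or.inr ⟨rfl, h⟩

/-- distance at most two, unfolded -/
theorem edist_le_two_cases {V : Type*} {G : SimpleGraph V} {x y : V} (h : G.edist x y ≤ (2 : ℕ)) :
    x = y ∨ G.Adj x y ∨ ∃ w, G.Adj x w ∧ G.Adj w y := by
  have hne : G.edist x y ≠ ⊤ := fun h' => by
    rw [h'] at h
    exact absurd h (by simp)
  obtain ⟨p, hp⟩ := SimpleGraph.exists_walk_of_edist_ne_top hne
  rw [← hp] at h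
  have h2 : p.length ≤ 2 := by exact_mod_cast h
  cases p with
  | nil => exact Or.inl rfl
  | cons h1 q =>
    cases q with
    | nil => exact Or.inr (Or.inl h1)
    | cons h3 r =>
      cases r with
      | nil => exact Or.inr (Or.inr ⟨_, h1, h3⟩)
      | cons h4 s => simp at h2

theorem edist_le_two_of_adj {V : Type*} {G : SimpleGraph V} {x y : V} (h : G.Adj x y) :
    G.edist x y ≤ (2 : ℕ) := by
  have := SimpleGraph.Walk.edist_le (SimpleGraph.Walk.cons h SimpleGraph.Walk.nil)
  refine this.trans ?_
  simp

theorem edist_le_two_of_adj_adj {V : Type*} {G : SimpleGraph V} {x w y : V} (h : G.Adj x w)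
    (h' : G.Adj w y) : G.edist x y ≤ (2 : ℕ) := by
  have := SimpleGraph.Walk.edist_le
    (SimpleGraph.Walk.cons h (SimpleGraph.Walk.cons h' SimpleGraph.Walk.nil))
  refine this.trans ?_
  simp

theorem fl_ball_mid {n m k : ℕ} (hm : m = 6 * k + 4) (i : ZMod n)
    (p : Fin (m - 2)) (h1 : 2 ≤ p.val) (h2 : p.val + 3 ≤ 6 * k + 2) (x : FlowerVert n m)
    (hx : (flowerGraph n m).edist x (Sum.inr (i, p)) ≤ (2 : ℕ)) :
    ∃ q : Fin (m - 2), x = Sum.inr (i, q) ∧ q.val ≤ p.val + 2 ∧ p.val ≤ q.val + 2 := by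
  rcases edist_le_two_cases hx with h | h | ⟨w, h, h'⟩
  · exact ⟨p, h, by omega, by omega⟩
  · rcases x with a | ⟨a, q⟩
    · rw [fl_adj_uv] at h
      omega
    · rw [fl_adj_vv] at h
      obtain ⟨rfl, h⟩ := h
      exact ⟨q, rfl, by omega, by omega⟩
  · rcases w with b | ⟨b, r⟩
    · rw [fl_adj_uv] at h'
      omega
    · rw [fl_adj_vv] at h'
      obtain ⟨rfl, h'⟩ := h'
      rcases x with a | ⟨a, q⟩
      · rw [fl_adj_uv] at h
        omega
      · rw [fl_adj_vv] at h
        obtain ⟨rfl, h⟩ := h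
        exact ⟨q, rfl, by omega, by omega⟩

theorem fl_ball_left {n m k : ℕ} (hn : 3 ≤ n) (hm : m = 6 * k + 4) (i : ZMod n)
    (p : Fin (m - 2)) (h2 : p.val + 2 ≤ 6 * k + 2) (x : FlowerVert n m)
    (hx : (flowerGraph n m).edist x (Sum.inr (i, p)) ≤ (2 : ℕ)) :
    (∃ q : Fin (m - 2), x = Sum.inr (i, q) ∧ q.val ≤ p.val + 2 ∧ p.val ≤ q.val + 2) ∨
      x = Sum.inl i ∨ (flowerGraph n m).Adj (Sum.inl i) x := by
  rcases edist_le_two_cases hx with h | h | ⟨w, h, h'⟩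
  · exact Or.inl ⟨p, h, by omega, by omega⟩
  · rcases x with a | ⟨a, q⟩
    · rw [fl_adj_uv] at h
      rcases h with h | h
      · exact Or.inr (Or.inl (by rw [h.1]))
      · omega
    · rw [fl_adj_vv] at h
      obtain ⟨rfl, h⟩ := h
      exact Or.inl ⟨q, rfl, by omega, by omega⟩
  · rcases w with b | ⟨b, r⟩
    · rw [fl_adj_uv] at h'
      rcases h' with h' | h'
      · obtain ⟨rfl, -⟩ := h'
        exact Or.inr (Or.inr h.symm)
      · omega
    · rw [fl_adj_vv] at h'
      obtain ⟨rfl, h'⟩ := h'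
      rcases x with a | ⟨a, q⟩
      · rw [fl_adj_uv] at h
        rcases h with h | h
        · exact Or.inr (Or.inl (by rw [h.1]))
        · exact Or.inr (Or.inr ((fl_adj_uu hn _ _).2 (Or.inl h.1)))
      · rw [fl_adj_vv] at h
        obtain ⟨rfl, h⟩ := h
        exact Or.inl ⟨q, rfl, by omega, by omega⟩

/-- The petal to which the pair `x, y` is charged. -/
def flCharge {n m : ℕ} : FlowerVert n m → FlowerVert n m → ZMod n
  | Sum.inr (i, _), _ => i
  | Sum.inl _, Sum.inr (i, _) => i
  | Sum.inl i, Sum.inl j => if j = i + 1 then i else j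

theorem flCharge_symm {n m : ℕ} (hn : 3 ≤ n) (x y : FlowerVert n m)
    (h : (flowerGraph n m).Adj x y) : flCharge x y = flCharge y x := by
  rcases x with a | ⟨a, q⟩ <;> rcases y with b | ⟨b, r⟩
  · rw [fl_adj_uu hn] at h
    have key : ¬ (b = a + 1 ∧ a = b + 1) := by
      rintro ⟨h1, h2⟩
      rw [h1] at h2
      have h3 : ((2 : ℕ) : ZMod n) = 0 := by
        have : a + 0 = a + (1 + 1) := by rw [← add_assoc, ← h2, add_zero]
        have := add_left_cancel this
        rw [this]; norm_num
      rw [ZMod.natCast_eq_zero_iff] at h3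
      have := Nat.le_of_dvd (by norm_num) h3
      omega
    simp only [flCharge]
    split_ifs <;> tauto
  · rfl
  · rfl
  · rw [fl_adj_vv] at h
    exact h.1.symm

/-- positions owned by `x` when its partner is `y` -/
def flOwn {n m : ℕ} : FlowerVert n m → FlowerVert n m → Finset ℕ
  | Sum.inl _, _ => ∅
  | Sum.inr (_, j), Sum.inr (_, j') =>
      if j'.val = j.val + 1 then Finset.Icc (j.val - 2) j.val else Finset.Icc j.val (j.val + 2)
  | Sum.inr (_, j), Sum.inl _ =>
      if j.val = m - 3 then Finset.Icc (j.val - 2) j.val else Finset.Icc j.val (j.val + 2)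

theorem flOwn_card {n m : ℕ} (x y : FlowerVert n m) : (flOwn x y).card ≤ 3 := by
  rcases x with a | ⟨a, q⟩ <;> rcases y with b | ⟨b, r⟩ <;> simp only [flOwn] <;>
    (try split_ifs) <;> simp <;> omega

theorem flOwn_cover {n m k : ℕ} (hm : m = 6 * k + 4) (i : ZMod n) (p q : Fin (m - 2))
    (y : FlowerVert n m) (h : (flowerGraph n m).Adj (Sum.inr (i, q)) y)
    (h1 : q.val ≤ p.val + 2) (h2 : p.val ≤ q.val + 2) :
    p.val ∈ flOwn (Sum.inr (i, q)) y ∨ p.val ∈ flOwn y (Sum.inr (i, q)) := by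
  rcases y with b | ⟨b, r⟩
  · rw [fl_adj_vu] at h
    left
    simp only [flOwn]
    split_ifs <;> simp <;> omega
  · rw [fl_adj_vv] at h
    simp only [flOwn]
    split_ifs <;> simp <;> omega

/-- The pairing data extracted from a matching. -/
structure FlPair (n m : ℕ) (D : Set (FlowerVert n m)) (f : FlowerVert n m → FlowerVert n m) :
    Prop where
  mem : ∀ x ∈ D, f x ∈ D
  inv : ∀ x ∈ D, f (f x) = x
  adj : ∀ x ∈ D, (flowerGraph n m).Adj x (f x)

theorem flPair_of_matching {n m : ℕ} {D : Set (FlowerVert n m)}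
    (h : ∃ M : (flowerGraph n m).Subgraph, M.verts = D ∧ M.IsMatching) :
    ∃ f, FlPair n m D f := by
  classical
  obtain ⟨M, rfl, hM⟩ := h
  have h1 : ∀ x, ∃ y, x ∈ M.verts → M.Adj x y ∧ ∀ z, M.Adj x z → z = y := by
    intro x
    by_cases hx : x ∈ M.verts
    · obtain ⟨y, hy, hy'⟩ := hM hx
      exact ⟨y, fun _ => ⟨hy, hy'⟩⟩
    · exact ⟨x, fun h => absurd h hx⟩
  choose f hf using h1
  refine ⟨f, ⟨?_, ?_, ?_⟩⟩
  · intro x hx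
    exact M.edge_vert (hf x hx).1.symm
  · intro x hx
    have h2 := (hf x hx).1
    exact ((hf (f x) (M.edge_vert h2.symm)).2 x h2.symm).symm
  · intro x hx
    exact M.adj_sub (hf x hx).1

theorem matching_of_flPair {n m : ℕ} {D : Set (FlowerVert n m)} {f}
    (h : FlPair n m D f) :
    ∃ M : (flowerGraph n m).Subgraph, M.verts = D ∧ M.IsMatching := by
  refine ⟨{ verts := D
            Adj := fun x y => x ∈ D ∧ f x = y
            adj_sub := ?_
            edge_vert := ?_
            symm := ?_ }, rfl, ?_⟩
  · rintro x y ⟨hx, rfl⟩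
    exact h.adj x hx
  · rintro x y ⟨hx, rfl⟩
    exact hx
  · constructor
    rintro x y ⟨hx, rfl⟩
    exact ⟨h.mem x hx, h.inv x hx⟩
  · intro x hx
    exact ⟨f x, ⟨hx, rfl⟩, fun y hy => hy.2.symm⟩

open Classical in
/-- the vertices of `D` charged to petal `i` -/
noncomputable def flF {n m : ℕ} [NeZero n] (D : Set (FlowerVert n m))
    (f : FlowerVert n m → FlowerVert n m) (i : ZMod n) : Finset (FlowerVert n m) :=
  haveI : Fintype (ZMod n) := ZMod.fintype n
  Finset.univ.filter (fun x => x ∈ D ∧ flCharge x (f x) = i)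

theorem mem_flF {n m : ℕ} [NeZero n] (D : Set (FlowerVert n m)) (f) (i : ZMod n) (x) :
    x ∈ flF D f i ↔ x ∈ D ∧ flCharge x (f x) = i := by
  simp [flF]

theorem flF_even {n m : ℕ} [NeZero n] (hn : 3 ≤ n) {D : Set (FlowerVert n m)} {f}
    (h : FlPair n m D f) (i : ZMod n) : Even (flF D f i).card := by
  have h1 : ∑ _x ∈ flF D f i, (1 : ZMod 2) = 0 := by
    refine Finset.sum_involution (fun x _ => f x) ?_ ?_ ?_ ?_
    · intro x hx
      decide
    · intro x hx _
      exact (h.adj x ((mem_flF _ _ _ _).1 hx).1).ne'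
    · intro x hx
      rw [mem_flF] at hx ⊢
      refine ⟨h.mem x hx.1, ?_⟩
      rw [h.inv x hx.1, ← flCharge_symm hn _ _ (h.adj x hx.1)]
      exact hx.2
    · intro x hx
      exact h.inv x ((mem_flF _ _ _ _).1 hx).1
  rw [Finset.sum_const, nsmul_eq_mul, mul_one, ZMod.natCast_eq_zero_iff] at h1
  exact even_iff_two_dvd.2 h1

theorem flF_cover {n m k : ℕ} [NeZero n] (hn : 3 ≤ n) (hm : m = 6 * k + 4)
    {D : Set (FlowerVert n m)} {f}
    (h : FlPair n m D f) (i : ZMod n) (p q : Fin (m - 2)) (hq : Sum.inr (i, q) ∈ D)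
    (h1 : q.val ≤ p.val + 2) (h2 : p.val ≤ q.val + 2) :
    ∃ x ∈ flF D f i, p.val ∈ flOwn x (f x) := by
  have ha := h.adj _ hq
  rcases flOwn_cover hm i p q _ ha h1 h2 with h3 | h3
  · exact ⟨_, (mem_flF _ _ _ _).2 ⟨hq, rfl⟩, h3⟩
  · refine ⟨_, (mem_flF _ _ _ _).2 ⟨h.mem _ hq, ?_⟩, ?_⟩
    · rw [h.inv _ hq, ← flCharge_symm hn _ _ ha]
      rfl
    · rw [h.inv _ hq]
      exact h3

theorem exists_dom {V : Type*} {G : SimpleGraph V} {D : Set V}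
    (hd : ∀ v ∉ D, ∃ u ∈ D, G.edist u v ≤ (2 : ℕ)) (v : V) : ∃ u ∈ D, G.edist u v ≤ (2 : ℕ) := by
  by_cases hv : v ∈ D
  · exact ⟨v, hv, by simp⟩
  · exact hd v hv

theorem flF_cover_mid {n m k : ℕ} [NeZero n] (hn : 3 ≤ n) (hm : m = 6 * k + 4)
    {D : Set (FlowerVert n m)} {f} (h : FlPair n m D f)
    (hd : ∀ v ∉ D, ∃ u ∈ D, (flowerGraph n m).edist u v ≤ (2 : ℕ)) (i : ZMod n) (p : ℕ)
    (h1 : 2 ≤ p) (h2 : p + 3 ≤ 6 * k + 2) :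
    ∃ x ∈ flF D f i, p ∈ flOwn x (f x) := by
  obtain ⟨u, hu, hu'⟩ := exists_dom hd (Sum.inr (i, ⟨p, by omega⟩))
  obtain ⟨q, rfl, h3, h4⟩ := fl_ball_mid hm i _ h1 h2 u hu'
  exact flF_cover hn hm h i ⟨p, by omega⟩ q hu h3 h4

theorem flF_lower {n m k : ℕ} [NeZero n] (hn : 3 ≤ n) (hm : m = 6 * k + 4)
    {D : Set (FlowerVert n m)} {f} (h : FlPair n m D f)
    (hd : ∀ v ∉ D, ∃ u ∈ D, (flowerGraph n m).edist u v ≤ (2 : ℕ)) (i : ZMod n) :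
    2 * k ≤ (flF D f i).card := by
  have hsub : Finset.Ico 2 (6 * k) ⊆ (flF D f i).biUnion (fun x => flOwn x (f x)) := by
    intro p hp
    rw [Finset.mem_Ico] at hp
    rw [Finset.mem_biUnion]
    exact flF_cover_mid hn hm h hd i p (by omega) (by omega)
  have h1 := Finset.card_le_card hsub
  have h2 := Finset.card_biUnion_le_card_mul (flF D f i) (fun x => flOwn x (f x)) 3
    (fun x _ => flOwn_card _ _)
  rw [Nat.card_Ico] at h1
  omega

theorem flF_lower_useless {n m k : ℕ} [NeZero n] (hn : 3 ≤ n) (hm : m = 6 * k + 4)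
    {D : Set (FlowerVert n m)} {f} (h : FlPair n m D f)
    (hd : ∀ v ∉ D, ∃ u ∈ D, (flowerGraph n m).edist u v ≤ (2 : ℕ)) (i : ZMod n)
    (x : FlowerVert n m) (hx : x ∈ flF D f i)
    (hu : ∀ p ∈ flOwn x (f x), ¬ (2 ≤ p ∧ p < 6 * k)) :
    2 * k + 1 ≤ (flF D f i).card := by
  classical
  have hsub : Finset.Ico 2 (6 * k) ⊆ ((flF D f i).erase x).biUnion (fun x => flOwn x (f x)) := by
    intro p hp
    rw [Finset.mem_Ico] at hp
    rw [Finset.mem_biUnion]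
    obtain ⟨y, hy, hy'⟩ := flF_cover_mid hn hm h hd i p (by omega) (by omega)
    refine ⟨y, Finset.mem_erase.2 ⟨?_, hy⟩, hy'⟩
    rintro rfl
    exact hu p hy' hp
  have h1 := Finset.card_le_card hsub
  have h2 := Finset.card_biUnion_le_card_mul ((flF D f i).erase x) (fun x => flOwn x (f x)) 3
    (fun x _ => flOwn_card _ _)
  have h3 := Finset.card_erase_add_one hx
  rw [Nat.card_Ico] at h1
  omega

theorem flF_lower_inl {n m k : ℕ} [NeZero n] (hn : 3 ≤ n) (hm : m = 6 * k + 4)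
    {D : Set (FlowerVert n m)} {f} (h : FlPair n m D f)
    (hd : ∀ v ∉ D, ∃ u ∈ D, (flowerGraph n m).edist u v ≤ (2 : ℕ)) (a i : ZMod n)
    (hx : Sum.inl a ∈ flF D f i) :
    2 * k + 1 ≤ (flF D f i).card :=
  flF_lower_useless hn hm h hd i _ hx (by simp [flOwn])

theorem flF_lower_end {n m k : ℕ} [NeZero n] (hn : 3 ≤ n) (hm : m = 6 * k + 4)
    {D : Set (FlowerVert n m)} {f} (h : FlPair n m D f)
    (hd : ∀ v ∉ D, ∃ u ∈ D, (flowerGraph n m).edist u v ≤ (2 : ℕ)) (i : ZMod n)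
    (q : Fin (m - 2)) (hq : q.val = 0 ∨ q.val = m - 3) (hx : Sum.inr (i, q) ∈ D) :
    2 * k + 1 ≤ (flF D f i).card := by
  have ha := h.adj _ hx
  rcases hf : f (Sum.inr (i, q)) with b | ⟨b, r⟩
  · refine flF_lower_inl hn hm h hd b i ((mem_flF _ _ _ _).2 ?_)
    rw [← hf, h.inv _ hx]
    refine ⟨h.mem _ hx, ?_⟩
    rw [hf]
    rfl
  · refine flF_lower_useless hn hm h hd i _ ((mem_flF _ _ _ _).2 ⟨hx, rfl⟩) ?_
    rw [hf] at ha ⊢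
    rw [fl_adj_vv] at ha
    intro p hp
    have := r.isLt
    simp only [flOwn] at hp
    split_ifs at hp <;> rw [Finset.mem_Icc] at hp <;> omega

theorem flF_lower_near {n m k : ℕ} [NeZero n] (hn : 3 ≤ n) (hm : m = 6 * k + 4)
    {D : Set (FlowerVert n m)} {f} (h : FlPair n m D f)
    (hd : ∀ v ∉ D, ∃ u ∈ D, (flowerGraph n m).edist u v ≤ (2 : ℕ)) (i : ZMod n)
    (h1 : Sum.inl i ∉ D) (h2 : ∀ x ∈ D, ¬ (flowerGraph n m).Adj (Sum.inl i) x) :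
    2 * k + 1 ≤ (flF D f i).card := by
  have hsub : Finset.range (6 * k + 1) ⊆ (flF D f i).biUnion (fun x => flOwn x (f x)) := by
    intro p hp
    rw [Finset.mem_range] at hp
    rw [Finset.mem_biUnion]
    obtain ⟨u, hu, hu'⟩ := exists_dom hd (Sum.inr (i, ⟨p, by omega⟩))
    rcases fl_ball_left hn hm i _ (by simp only; omega) u hu' with ⟨q, rfl, h3, h4⟩ | rfl | h5
    · exact flF_cover hn hm h i ⟨p, by omega⟩ q hu h3 h4
    · exact absurd hu h1
    · exact absurd h5 (h2 u hu)
  have h1 := Finset.card_le_card hsub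
  have h2 := Finset.card_biUnion_le_card_mul (flF D f i) (fun x => flOwn x (f x)) 3
    (fun x _ => flOwn_card _ _)
  rw [Finset.card_range] at h1
  omega

/-- a hub vertex in `D` is charged to one of its two petals -/
theorem fl_inl_charge {n m : ℕ} [NeZero n] (hn : 3 ≤ n)
    {D : Set (FlowerVert n m)} {f} (h : FlPair n m D f) (a : ZMod n)
    (hx : Sum.inl (a + 1) ∈ D) :
    Sum.inl (a + 1) ∈ flF D f a ∨ Sum.inl (a + 1) ∈ flF D f (a + 1) := by
  simp only [mem_flF, hx, true_and]
  have ha := h.adj _ hx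
  rcases hf : f (Sum.inl (a + 1)) with b | ⟨b, r⟩ <;> rw [hf] at ha
  · rw [fl_adj_uu hn] at ha
    simp only [flCharge]
    split_ifs with h1
    · simp
    · left
      rcases ha with ha | ha
      · exact absurd ha h1
      · exact (add_right_cancel ha).symm
  · rw [fl_adj_uv] at ha
    simp only [flCharge]
    rcases ha with ha | ha
    · exact Or.inr ha.1
    · exact Or.inl (add_right_cancel ha.1).symm

theorem fl_window {n m k : ℕ} [NeZero n] (hn : 3 ≤ n) (hm : m = 6 * k + 4)
    {D : Set (FlowerVert n m)} {f} (h : FlPair n m D f)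
    (hd : ∀ v ∉ D, ∃ u ∈ D, (flowerGraph n m).edist u v ≤ (2 : ℕ)) (a : ZMod n) :
    8 * k + 2 ≤ (flF D f a).card + (flF D f (a + 1)).card + (flF D f (a + 1 + 1)).card
      + (flF D f (a + 1 + 1 + 1)).card := by
  have key : 2 * k + 1 ≤ (flF D f a).card ∨ 2 * k + 1 ≤ (flF D f (a + 1)).card ∨
      2 * k + 1 ≤ (flF D f (a + 1 + 1)).card ∨ 2 * k + 1 ≤ (flF D f (a + 1 + 1 + 1)).card := by
    have hub : ∀ b, Sum.inl (b + 1) ∈ D → 2 * k + 1 ≤ (flF D f b).card ∨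
        2 * k + 1 ≤ (flF D f (b + 1)).card := by
      intro b hb
      rcases fl_inl_charge hn h b hb with h1 | h1
      · exact Or.inl (flF_lower_inl hn hm h hd _ _ h1)
      · exact Or.inr (flF_lower_inl hn hm h hd _ _ h1)
    by_cases h1 : Sum.inl (a + 1 + 1) ∈ D
    · have := hub _ h1
      tauto
    by_cases h2 : ∀ x ∈ D, ¬ (flowerGraph n m).Adj (Sum.inl (a + 1 + 1)) x
    · have := flF_lower_near hn hm h hd _ h1 h2
      tauto
    push Not at h2
    obtain ⟨x, hx, hx'⟩ := h2
    rcases x with b | ⟨b, r⟩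
    · rw [fl_adj_uu hn] at hx'
      rcases hx' with rfl | h3
      · have := hub _ hx
        tauto
      · obtain rfl := add_right_cancel h3
        have := hub _ hx
        tauto
    · rw [fl_adj_uv] at hx'
      rcases hx' with ⟨rfl, h3⟩ | ⟨h4, h3⟩
      · have := flF_lower_end hn hm h hd _ r (Or.inl h3) hx
        tauto
      · obtain rfl := add_right_cancel h4
        have := flF_lower_end hn hm h hd _ r (Or.inr h3) hx
        tauto
  have l := flF_lower hn hm h hd
  have e := fun i => (flF_even hn h i).two_dvd
  have l1 := l a
  have l2 := l (a + 1)
  have l3 := l (a + 1 + 1)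
  have l4 := l (a + 1 + 1 + 1)
  have e1 := e a
  have e2 := e (a + 1)
  have e3 := e (a + 1 + 1)
  have e4 := e (a + 1 + 1 + 1)
  omega

theorem fl_card {n m : ℕ} [NeZero n] (D : Set (FlowerVert n m)) (f) :
    D.ncard = ∑ i : ZMod n, (flF D f i).card := by
  classical
  rw [Set.ncard_eq_toFinset_card D (Set.toFinite D)]
  rw [Finset.card_eq_sum_card_fiberwise (f := fun x => flCharge x (f x)) (t := Finset.univ)
    (by intro x _; simp)]
  refine Finset.sum_congr rfl fun i _ => ?_
  congr 1
  ext x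
  simp [mem_flF]

theorem fl_lower {n m k : ℕ} (hn : 3 ≤ n) (hm : m = 6 * k + 4)
    {D : Set (FlowerVert n m)} (hD : IsKDistPairedDominating (flowerGraph n m) 2 D) :
    ∃ p, D.ncard = 2 * p ∧ n * (4 * k + 1) ≤ 4 * p := by
  have : NeZero n := ⟨by omega⟩
  obtain ⟨hd, hM⟩ := hD
  obtain ⟨f, h⟩ := flPair_of_matching hM
  have hc := fl_card D f
  have hev : Even D.ncard := by
    rw [hc]
    exact Finset.even_sum _ (fun i _ => flF_even hn h i)
  obtain ⟨p, hp⟩ := hev.two_dvd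
  refine ⟨p, hp, ?_⟩
  have shift : ∀ g : ZMod n → ℕ, ∑ i, g (i + 1) = ∑ i, g i := fun g =>
    Equiv.sum_comp (Equiv.addRight (1 : ZMod n)) g
  have hs := Finset.sum_le_sum (s := (Finset.univ : Finset (ZMod n)))
    (fun i _ => fl_window hn hm h hd i)
  simp only [Finset.sum_add_distrib, Finset.sum_const, Finset.card_univ, ZMod.card,
    smul_eq_mul] at hs
  rw [shift (fun i => (flF D f (i + 1 + 1)).card), shift (fun i => (flF D f (i + 1)).card),
    shift (fun i => (flF D f i).card), ← hc, hp] at hs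
  nlinarith

/-- the chosen hub indices, a paired dominating set of the cycle -/
def flHub (n a : ℕ) : Prop := a % 4 ≤ 1 ∨ (n % 4 = 1 ∧ a + 2 = n)

/-- the partner of a chosen hub index -/
def flHubF (n a : ℕ) : ℕ :=
  if n % 4 = 1 ∧ a + 1 = n then n - 2
  else if n % 4 = 1 ∧ a + 2 = n then n - 1
  else if a % 4 = 0 then a + 1 else a - 1

theorem flHubF_spec (n a : ℕ) (hn : 3 ≤ n) (ha : a < n) (h : flHub n a) :
    flHubF n a < n ∧ flHub n (flHubF n a) ∧ flHubF n (flHubF n a) = a ∧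
      (flHubF n a = a + 1 ∨ a = flHubF n a + 1) := by
  unfold flHub at h
  have h1 : flHubF n a < n ∧ flHub n (flHubF n a) ∧
      (flHubF n a = a + 1 ∨ a = flHubF n a + 1) := by
    unfold flHub flHubF
    split_ifs <;> omega
  refine ⟨h1.1, h1.2.1, ?_, h1.2.2⟩
  have h2 := h1.2.1
  have h3 := h1.2.2
  have h4 := h1.1
  unfold flHub at h2
  generalize hb : flHubF n a = b at *
  unfold flHubF at hb ⊢
  split_ifs at hb ⊢ <;> omega

/-- the chosen hubs in `ZMod n` -/
def flH (n : ℕ) : Set (ZMod n) := {i | flHub n i.val}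

/-- partner of a chosen hub in `ZMod n` -/
def flHf (n : ℕ) (i : ZMod n) : ZMod n := ((flHubF n i.val : ℕ) : ZMod n)

theorem flH_pair {n : ℕ} (hn : 3 ≤ n) (i : ZMod n) (hi : i ∈ flH n) :
    flHf n i ∈ flH n ∧ flHf n (flHf n i) = i ∧ (flHf n i = i + 1 ∨ i = flHf n i + 1) := by
  have : NeZero n := ⟨by omega⟩
  obtain ⟨h1, h2, h3, h4⟩ := flHubF_spec n i.val hn (ZMod.val_lt i) hi
  have hv : (flHf n i).val = flHubF n i.val := ZMod.val_natCast_of_lt h1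
  refine ⟨?_, ?_, ?_⟩
  · change flHub n (flHf n i).val
    rw [hv]
    exact h2
  · rw [flHf, hv, h3, ZMod.natCast_zmod_val]
  · rcases h4 with h4 | h4
    · left
      rw [flHf, h4, Nat.cast_add, Nat.cast_one, ZMod.natCast_zmod_val]
    · right
      rw [flHf, ← Nat.cast_one, ← Nat.cast_add, ← h4, ZMod.natCast_zmod_val]

theorem flH_dom {n : ℕ} (hn : 3 ≤ n) (i : ZMod n) :
    i ∈ flH n ∨ i + 1 ∈ flH n ∨ ∃ b, b + 1 = i ∧ b ∈ flH n := by
  have : NeZero n := ⟨by omega⟩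
  have hlt := ZMod.val_lt i
  have hi := ZMod.natCast_zmod_val i
  by_cases h0 : i.val % 4 ≤ 1
  · exact Or.inl (Or.inl h0)
  by_cases h2 : i.val % 4 = 2
  · right; right
    refine ⟨((i.val - 1 : ℕ) : ZMod n), ?_, ?_⟩
    · have h5 : i.val - 1 + 1 = i.val := by omega
      have h6 := congrArg (Nat.cast : ℕ → ZMod n) h5
      rw [Nat.cast_add, Nat.cast_one, hi] at h6
      exact h6
    · change flHub n _
      rw [ZMod.val_natCast_of_lt (by omega)]
      exact Or.inl (by omega)
  · right; left
    have h3 : i + 1 = ((i.val + 1 : ℕ) : ZMod n) := by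
      rw [Nat.cast_add, Nat.cast_one, hi]
    change flHub n _
    rw [h3]
    by_cases h4 : i.val + 1 = n
    · rw [h4]
      simp [flHub]
    · rw [ZMod.val_natCast_of_lt (by omega)]
      exact Or.inl (by omega)

open Classical in
/-- offset of the chosen pairs inside petal `i` -/
noncomputable def flOff (n : ℕ) (i : ZMod n) : ℕ :=
  if i ∈ flH n then 4 else if i + 1 ∈ flH n then 2 else 3

theorem flOff_cases {n : ℕ} (hn : 3 ≤ n) (i : ZMod n) :
    (flOff n i = 4 ∧ i ∈ flH n) ∨ (flOff n i = 2 ∧ i + 1 ∈ flH n) ∨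
      (flOff n i = 3 ∧ (∃ b, b + 1 = i ∧ b ∈ flH n) ∧ i + 1 + 1 ∈ flH n) := by
  unfold flOff
  split_ifs with h1 h2
  · exact Or.inl ⟨rfl, h1⟩
  · exact Or.inr (Or.inl ⟨rfl, h2⟩)
  · refine Or.inr (Or.inr ⟨rfl, ?_, ?_⟩)
    · have := flH_dom hn i
      tauto
    · rcases flH_dom hn (i + 1) with h | h | ⟨b, h, hbb⟩
      · exact absurd h h2
      · exact h
      · rw [add_right_cancel h] at hbb
        exact absurd hbb h1

/-- the dominating set -/
def flD (n m : ℕ) : Set (FlowerVert n m)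
  | Sum.inl i => i ∈ flH n
  | Sum.inr (i, j) => j.val % 6 = flOff n i ∨ j.val % 6 = flOff n i + 1

theorem flD_inl {n m : ℕ} (i : ZMod n) : (Sum.inl i : FlowerVert n m) ∈ flD n m ↔ i ∈ flH n :=
  Iff.rfl

theorem flD_inr {n m : ℕ} (i : ZMod n) (j : Fin (m - 2)) :
    (Sum.inr (i, j) : FlowerVert n m) ∈ flD n m ↔
      (j.val % 6 = flOff n i ∨ j.val % 6 = flOff n i + 1) :=
  Iff.rfl

theorem flOff_bound {n : ℕ} (i : ZMod n) : 2 ≤ flOff n i ∧ flOff n i ≤ 4 := by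
  unfold flOff
  split_ifs <;> omega

/-- the pairing of the dominating set -/
noncomputable def flDf (n m : ℕ) : FlowerVert n m → FlowerVert n m
  | Sum.inl i => Sum.inl (flHf n i)
  | Sum.inr (i, j) =>
      if h : j.val % 6 = flOff n i ∧ j.val + 1 < m - 2 then Sum.inr (i, ⟨j.val + 1, h.2⟩)
      else Sum.inr (i, ⟨j.val - 1, by omega⟩)

theorem flD_pair {n m k : ℕ} (hn : 3 ≤ n) (hm : m = 6 * k + 4) :
    FlPair n m (flD n m) (flDf n m) := by
  have key : ∀ (i : ZMod n) (j : Fin (m - 2)), (Sum.inr (i, j) : FlowerVert n m) ∈ flD n m →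
      ∃ j' : Fin (m - 2), flDf n m (Sum.inr (i, j)) = Sum.inr (i, j') ∧
        ((j.val % 6 = flOff n i ∧ j'.val = j.val + 1) ∨
          (j.val % 6 = flOff n i + 1 ∧ j.val = j'.val + 1)) := by
    intro i j hj
    rw [flD_inr] at hj
    have hb := flOff_bound i
    have hlt := j.isLt
    by_cases h : j.val % 6 = flOff n i
    · have h' : j.val + 1 < m - 2 := by omega
      refine ⟨⟨j.val + 1, h'⟩, ?_, Or.inl ⟨h, rfl⟩⟩
      simp [flDf, h, h']
    · refine ⟨⟨j.val - 1, by omega⟩, ?_, Or.inr ⟨by omega, ?_⟩⟩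
      · simp [flDf, h]
      · simp only
        omega
  refine ⟨?_, ?_, ?_⟩
  · rintro (i | ⟨i, j⟩) hx
    · exact (flH_pair hn i hx).1
    · obtain ⟨j', h1, h2⟩ := key i j hx
      have hb := flOff_bound i
      rw [h1, flD_inr]
      omega
  · rintro (i | ⟨i, j⟩) hx
    · exact congrArg Sum.inl (flH_pair hn i hx).2.1
    · obtain ⟨j', h1, h2⟩ := key i j hx
      have hb := flOff_bound i
      have hx' : (Sum.inr (i, j') : FlowerVert n m) ∈ flD n m := by
        rw [flD_inr]
        omega
      obtain ⟨j'', h3, h4⟩ := key i j' hx'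
      rw [h1, h3]
      have : j'' = j := Fin.ext (by omega)
      rw [this]
  · rintro (i | ⟨i, j⟩) hx
    · exact (fl_adj_uu hn _ _).2 (flH_pair hn i hx).2.2
    · obtain ⟨j', h1, h2⟩ := key i j hx
      rw [h1, fl_adj_vv]
      exact ⟨rfl, by omega⟩

theorem fl_path_edist {n m : ℕ} (i : ZMod n) (p q : Fin (m - 2)) (h1 : p.val ≤ q.val + 2)
    (h2 : q.val ≤ p.val + 2) :
    (flowerGraph n m).edist (Sum.inr (i, q)) (Sum.inr (i, p)) ≤ (2 : ℕ) := by
  have hp := p.isLt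
  have hq := q.isLt
  have hc : p.val = q.val ∨ p.val = q.val + 1 ∨ q.val = p.val + 1 ∨ p.val = q.val + 2 ∨
    q.val = p.val + 2 := by omega
  rcases hc with h | h | h | h | h
  · rw [Fin.ext h]
    simp
  · exact edist_le_two_of_adj ((fl_adj_vv _ _ _ _).2 ⟨rfl, by omega⟩)
  · exact edist_le_two_of_adj ((fl_adj_vv _ _ _ _).2 ⟨rfl, by omega⟩)
  · exact edist_le_two_of_adj_adj (w := Sum.inr (i, ⟨q.val + 1, by omega⟩))
      ((fl_adj_vv _ _ _ _).2 ⟨rfl, by simp⟩) ((fl_adj_vv _ _ _ _).2 ⟨rfl, by simp only; omega⟩)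
  · exact edist_le_two_of_adj_adj (w := Sum.inr (i, ⟨p.val + 1, by omega⟩))
      ((fl_adj_vv _ _ _ _).2 ⟨rfl, by simp only; omega⟩) ((fl_adj_vv _ _ _ _).2 ⟨rfl, by simp⟩)

theorem flD_dom {n m k : ℕ} (hn : 3 ≤ n) (hm : m = 6 * k + 4) (v : FlowerVert n m) :
    ∃ u ∈ flD n m, (flowerGraph n m).edist u v ≤ (2 : ℕ) := by
  rcases v with i | ⟨i, p⟩
  · rcases flH_dom hn i with h | h | ⟨b, rfl, h⟩
    · exact ⟨Sum.inl i, h, by simp⟩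
    · exact ⟨Sum.inl (i + 1), h, edist_le_two_of_adj ((fl_adj_uu hn _ _).2 (Or.inr rfl))⟩
    · exact ⟨Sum.inl b, h, edist_le_two_of_adj ((fl_adj_uu hn _ _).2 (Or.inl rfl))⟩
  · have hp := p.isLt
    have viaq : ∀ q : ℕ, q < m - 2 → (q % 6 = flOff n i ∨ q % 6 = flOff n i + 1) →
        p.val ≤ q + 2 → q ≤ p.val + 2 →
        ∃ u ∈ flD n m, (flowerGraph n m).edist u (Sum.inr (i, p)) ≤ (2 : ℕ) := by
      intro q hq h1 h2 h3
      exact ⟨Sum.inr (i, ⟨q, hq⟩), h1, fl_path_edist i p ⟨q, hq⟩ h2 h3⟩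
    rcases flOff_cases hn i with ⟨ho, hi⟩ | ⟨ho, hi⟩ | ⟨ho, ⟨b, hb, hb'⟩, hi⟩
    · by_cases h0 : p.val = 0
      · exact ⟨Sum.inl i, hi, edist_le_two_of_adj ((fl_adj_uv _ _ _).2 (Or.inl ⟨rfl, h0⟩))⟩
      by_cases h1 : p.val = 1
      · exact ⟨Sum.inl i, hi, edist_le_two_of_adj_adj (w := Sum.inr (i, ⟨0, by omega⟩))
          ((fl_adj_uv _ _ _).2 (Or.inl ⟨rfl, rfl⟩))
          ((fl_adj_vv _ _ _ _).2 ⟨rfl, by simp only; omega⟩)⟩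
      have hr : p.val % 6 < 6 := Nat.mod_lt _ (by norm_num)
      rw [ho] at viaq
      by_cases hlow : p.val % 6 = 2 ∨ p.val % 6 = 3
      · exact viaq (p.val / 6 * 6 + 4) (by omega) (by omega) (by omega) (by omega)
      by_cases hself : p.val % 6 = 4 ∨ p.val % 6 = 5
      · exact viaq p.val (by omega) (by omega) (by omega) (by omega)
      · exact viaq (p.val / 6 * 6 - 1) (by omega) (by omega) (by omega) (by omega)
    · by_cases h0 : p.val = m - 3
      · exact ⟨Sum.inl (i + 1), hi,
          edist_le_two_of_adj ((fl_adj_uv _ _ _).2 (Or.inr ⟨rfl, h0⟩))⟩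
      by_cases h1 : p.val + 1 = m - 3
      · exact ⟨Sum.inl (i + 1), hi, edist_le_two_of_adj_adj
          (w := Sum.inr (i, ⟨m - 3, by omega⟩))
          ((fl_adj_uv _ _ _).2 (Or.inr ⟨rfl, rfl⟩))
          ((fl_adj_vv _ _ _ _).2 ⟨rfl, by simp only; omega⟩)⟩
      rw [ho] at viaq
      by_cases hlow : p.val % 6 ≤ 2
      · exact viaq (p.val / 6 * 6 + 2) (by omega) (by omega) (by omega) (by omega)
      · exact viaq (p.val / 6 * 6 + 3) (by omega) (by omega) (by omega) (by omega)
    · by_cases h0 : p.val = 0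
      · exact ⟨Sum.inl b, hb', edist_le_two_of_adj_adj (w := Sum.inl i)
          ((fl_adj_uu hn _ _).2 (Or.inl hb.symm)) ((fl_adj_uv _ _ _).2 (Or.inl ⟨rfl, h0⟩))⟩
      by_cases h1 : p.val = m - 3
      · exact ⟨Sum.inl (i + 1 + 1), hi, edist_le_two_of_adj_adj (w := Sum.inl (i + 1))
          ((fl_adj_uu hn _ _).2 (Or.inr rfl)) ((fl_adj_uv _ _ _).2 (Or.inr ⟨rfl, h1⟩))⟩
      rw [ho] at viaq
      by_cases hz : p.val % 6 = 0
      · exact viaq (p.val / 6 * 6 - 2) (by omega) (by omega) (by omega) (by omega)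
      by_cases hlow : p.val % 6 ≤ 3
      · exact viaq (p.val / 6 * 6 + 3) (by omega) (by omega) (by omega) (by omega)
      · exact viaq (p.val / 6 * 6 + 4) (by omega) (by omega) (by omega) (by omega)

theorem flD_card {n m k : ℕ} (hn : 3 ≤ n) (hm : m = 6 * k + 4) :
    (flD n m).ncard ≤ 2 * (n * k + (n + 3) / 4) := by
  classical
  have : NeZero n := ⟨by omega⟩
  let A : Finset (FlowerVert n m) :=
    (Finset.range ((n + 3) / 4) ×ˢ Finset.range 2).image
      (fun s => Sum.inl ((min (4 * s.1) (n - 2) + s.2 : ℕ) : ZMod n))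
  let B : Finset (FlowerVert n m) :=
    ((Finset.univ : Finset (ZMod n)) ×ˢ (Finset.range k ×ˢ Finset.range 2)).image
      (fun s => if h : 6 * s.2.1 + flOff n s.1 + s.2.2 < m - 2 then
        Sum.inr (s.1, ⟨6 * s.2.1 + flOff n s.1 + s.2.2, h⟩) else Sum.inl s.1)
  have hA : A.card ≤ (n + 3) / 4 * 2 := by
    refine Finset.card_image_le.trans ?_
    simp
  have hB : B.card ≤ n * (k * 2) := by
    refine Finset.card_image_le.trans ?_
    simp [ZMod.card]
  have hsub : flD n m ⊆ (↑(A ∪ B) : Set (FlowerVert n m)) := by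
    rintro (i | ⟨i, j⟩) hx
    · rw [Finset.mem_coe, Finset.mem_union]
      left
      have hx' : flHub n i.val := hx
      have hlt := ZMod.val_lt i
      unfold flHub at hx'
      have hex : ∃ s b, s < (n + 3) / 4 ∧ b < 2 ∧ min (4 * s) (n - 2) + b = i.val := by
        by_cases hc : n % 4 = 1 ∧ i.val + 2 = n
        · exact ⟨i.val / 4 + 1, 0, by omega, by omega, by omega⟩
        · exact ⟨i.val / 4, i.val - min (4 * (i.val / 4)) (n - 2), by omega, by omega, by omega⟩
      obtain ⟨s, b, h1, h2, h3⟩ := hex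
      refine Finset.mem_image.2 ⟨(s, b), by simp [h1, h2], ?_⟩
      simp only
      rw [h3, ZMod.natCast_zmod_val]
    · rw [Finset.mem_coe, Finset.mem_union]
      right
      rw [flD_inr] at hx
      have hb := flOff_bound i
      have hlt := j.isLt
      have hj : 6 * (j.val / 6) + flOff n i + (j.val % 6 - flOff n i) = j.val := by omega
      refine Finset.mem_image.2 ⟨(i, j.val / 6, j.val % 6 - flOff n i), ?_, ?_⟩
      · simp only [Finset.mem_product, Finset.mem_univ, Finset.mem_range, true_and]
        omega
      · simp only [hj, hlt, dif_pos]
  have h1 := Set.ncard_le_ncard hsub (Finset.finite_toSet _)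
  rw [Set.ncard_coe_finset] at h1
  have h2 := Finset.card_union_le A B
  have h3 : n * (k * 2) = 2 * (n * k) := by ring
  omega

theorem fl_value {n m k : ℕ} (hn : 3 ≤ n) (hm : m = 6 * k + 4) :
    kDistPairedDomNum (flowerGraph n m) 2 = 2 * (n * k + (n + 3) / 4) := by
  have hmem : IsKDistPairedDominating (flowerGraph n m) 2 (flD n m) :=
    ⟨fun v _ => flD_dom hn hm v, matching_of_flPair (flD_pair hn hm)⟩
  apply le_antisymm
  · refine le_trans (Nat.sInf_le ?_) (flD_card hn hm)
    exact ⟨_, hmem, rfl⟩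
  · refine le_csInf ⟨_, _, hmem, rfl⟩ ?_
    rintro c ⟨D, hD, rfl⟩
    obtain ⟨p, hp, hp'⟩ := fl_lower hn hm hD
    rw [hp]
    have : n * (4 * k + 1) = 4 * (n * k) + n := by ring
    omega

end FlowerProof

theorem flower_twoDistPairedDomNum_mod6_4 (n m : ℕ) (hn : 3 ≤ n) (hm : 3 ≤ m)
    (h : m % 6 = 4) :
    (kDistPairedDomNum (flowerGraph n m) 2 : ℤ) = 2 * ⌈(2 * (n : ℚ) * m - 5 * n) / 12⌉ := by
  obtain ⟨k, hk⟩ : ∃ k, m = 6 * k + 4 := ⟨m / 6, by omega⟩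
  rw [fl_value hn hk]
  have hc : ⌈(2 * (n : ℚ) * m - 5 * n) / 12⌉ = ((n * k + (n + 3) / 4 : ℕ) : ℤ) := by
    obtain ⟨t, ht⟩ : ∃ t, t = (n + 3) / 4 := ⟨_, rfl⟩
    rw [← ht, Int.ceil_eq_iff]
    have h1 : (n : ℚ) ≤ 4 * t := by
      have : n ≤ 4 * t := by omega
      exact_mod_cast this
    have h2 : (4 * t : ℚ) ≤ n + 3 := by
      have : 4 * t ≤ n + 3 := by omega
      exact_mod_cast this
    rw [hk]
    push_cast
    constructor <;> linarith
  rw [hc]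
  push_cast
  ring
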